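/- arXiv:2201.05030 — 2 statements merged into one kernel-verified Lean document; each statement's English description precedes it below -/
import Mathlib

section
/- Let 2 ≤ k ≤ n and let b > 0 and B ≥ 0 be real numbers. There exists a constant C > 0, depending only on n, k, b, B, such that for every λ ∈ Γ_{k−1} and all real numbers β_0,…,β_{k−2} with β_l ≥ b for every l, if |f(λ)| ≤ B then for each 0 ≤ l ≤ k−2 one has 0 < σ_l(λ)/σ_{k−1}(λ) ≤ C. -/
open Finset

/-- The `k`-th elementary symmetric function of `lam : Fin n → ℝ`. -/
noncomputable def esymm (n k : ℕ) (lam : Fin n → ℝ) : ℝ :=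
  ∑ s ∈ Finset.powersetCard k (Finset.univ : Finset (Fin n)), ∏ i ∈ s, lam i

/-- The Gårding cone `Γ_k ⊆ ℝ^n`. -/
def GammaCone (n k : ℕ) : Set (Fin n → ℝ) :=
  {lam | ∀ i : ℕ, 1 ≤ i → i ≤ k → 0 < esymm n i lam}

/-- The mixed Hessian operator
`f(λ) = σ_k(λ)/σ_{k-1}(λ) - ∑_{l=0}^{k-2} β_l σ_l(λ)/σ_{k-1}(λ)`. -/
noncomputable def fmix (n k : ℕ) (β : ℕ → ℝ) (lam : Fin n → ℝ) : ℝ :=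
  esymm n k lam / esymm n (k-1) lam
    - ∑ l ∈ Finset.range (k-1), β l * (esymm n l lam / esymm n (k-1) lam)

/-!
If `σ_{k-1} ≤ σ_k`, then log-concavity of `σ_0, σ_1, …` propagates the inequality downwards, so that
every `σ_l` with `l < k - 1` is at most `σ_{k-1}`. Otherwise `σ_k / σ_{k-1} ≤ 1`, and then the lower
bound `-B ≤ f` forces each of the nonnegative terms `β_l σ_l / σ_{k-1}` to be at most `1 + B`.

Log-concavity comes from real-rootedness of `∏ (X + λ_i)`: Rolle's theorem passes real-rootedness
on to the derivatives, and Laguerre's inequality `p p'' ≤ p'²` for them, evaluated at `0`, compares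
three consecutive coefficients.
-/

section RealRooted

open Polynomial

theorem eval_mul_eval_derivative_derivative_le_sq_of_splits {R : Type*} [CommRing R]
    [LinearOrder R] [IsStrictOrderedRing R] {p : R[X]} (hp : p.Splits) (x : R) :
    p.eval x * p.derivative.derivative.eval x ≤ p.derivative.eval x ^ 2 := by
  induction hp using Submonoid.closure_induction with
  | mem p hp => rcases hp with ⟨a, rfl⟩ | ⟨a, rfl⟩ <;> simp
  | one => simp
  | mul p q _ _ ihp ihq =>
    simp only [derivative_mul, derivative_add, eval_mul, eval_add]
    -- `(pq)'² - (pq)(pq)'' = q² (p'² - p p'') + p² (q'² - q q'')`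
    linarith [mul_le_mul_of_nonneg_left ihp (sq_nonneg (q.eval x)),
      mul_le_mul_of_nonneg_left ihq (sq_nonneg (p.eval x))]

theorem splits_derivative_of_splits {p : ℝ[X]} (hp : p.Splits) : p.derivative.Splits := by
  rw [splits_iff_card_roots] at hp ⊢
  have h_rolle := card_roots_le_derivative p
  have h_degree := natDegree_derivative_le p
  have h_roots := card_roots' p.derivative
  lia

theorem splits_iterate_derivative_of_splits {p : ℝ[X]} (hp : p.Splits) (m : ℕ) :
    (derivative^[m] p).Splits := by
  induction m with
  | zero => exact hp
  | succ m ih =>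
    rw [Function.iterate_succ_apply']
    exact splits_derivative_of_splits ih

theorem eval_zero_iterate_derivative {R : Type*} [Semiring R] (p : R[X]) (m : ℕ) :
    (derivative^[m] p).eval 0 = m.factorial * p.coeff m := by
  simp [← coeff_zero_eq_eval_zero, coeff_iterate_derivative, Nat.descFactorial_self]

theorem add_two_mul_coeff_mul_coeff_le_of_splits {p : ℝ[X]} (hp : p.Splits) (m : ℕ) :
    (m + 2) * (p.coeff m * p.coeff (m + 2)) ≤ (m + 1) * p.coeff (m + 1) ^ 2 := by
  have h_laguerre := eval_mul_eval_derivative_derivative_le_sq_of_splits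
    (splits_iterate_derivative_of_splits hp m) 0
  simp only [← Function.iterate_succ_apply', eval_zero_iterate_derivative, Nat.factorial_succ,
    Nat.cast_mul, Nat.cast_add, Nat.cast_one] at h_laguerre
  have h_pos : (0 : ℝ) < (m + 1) * (m.factorial : ℝ) ^ 2 := by positivity
  refine le_of_mul_le_mul_left ?_ h_pos
  linarith

theorem coeff_mul_coeff_le_sq_of_splits {p : ℝ[X]} (hp : p.Splits) (m : ℕ) :
    p.coeff m * p.coeff (m + 2) ≤ p.coeff (m + 1) ^ 2 := by
  have h_pos : (0 : ℝ) < m + 2 := by positivity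
  refine le_of_mul_le_mul_left ?_ h_pos
  calc (m + 2) * (p.coeff m * p.coeff (m + 2))
      ≤ (m + 1) * p.coeff (m + 1) ^ 2 := add_two_mul_coeff_mul_coeff_le_of_splits hp m
    _ ≤ (m + 2) * p.coeff (m + 1) ^ 2 := by gcongr; norm_num

theorem multiset_esymm_mul_esymm_le_sq (s : Multiset ℝ) (j : ℕ) :
    s.esymm j * s.esymm (j + 2) ≤ s.esymm (j + 1) ^ 2 := by
  rcases lt_or_ge s.card (j + 2) with hj | hj
  · have h_zero : s.esymm (j + 2) = 0 := by
      simp [Multiset.esymm, Multiset.powersetCard_eq_empty _ hj]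
    simpa [h_zero] using sq_nonneg (s.esymm (j + 1))
  · obtain ⟨d, hd⟩ := Nat.exists_eq_add_of_le' hj
    have h_splits : (s.map fun a ↦ X + C a).prod.Splits :=
      Splits.multisetProd (by simp [Splits.X_add_C])
    have h_coeff (i r : ℕ) (hir : i + r = s.card) :
        (s.map fun a ↦ X + C a).prod.coeff i = s.esymm r := by
      rw [Multiset.prod_X_add_C_coeff s (by lia), ← hir, Nat.add_sub_cancel_left]
    have h_newton := coeff_mul_coeff_le_sq_of_splits h_splits d
    rwa [h_coeff d (j + 2) (by lia), h_coeff (d + 1) (j + 1) (by lia),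
      h_coeff (d + 2) j (by lia), mul_comm] at h_newton

end RealRooted

theorem monotoneOn_Iic_succ_of_mul_le_sq {R : Type*} [Semiring R] [LinearOrder R]
    [IsStrictOrderedRing R] {a : ℕ → R} {m : ℕ} (hpos : ∀ j ≤ m, 0 < a j)
    (hlog : ∀ j < m, a j * a (j + 2) ≤ a (j + 1) ^ 2) (hm : a m ≤ a (m + 1)) :
    MonotoneOn a (Set.Iic (m + 1)) := by
  have h_step (j : ℕ) (hj : j ≤ m) : a j ≤ a (j + 1) := by
    induction hj using Nat.decreasingInduction with
    | self => exact hm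
    | of_succ j hj ih =>
      refine le_of_mul_le_mul_right ?_ (hpos (j + 1) hj)
      calc a j * a (j + 1)
          ≤ a j * a (j + 2) := mul_le_mul_of_nonneg_left ih (hpos j hj.le).le
        _ ≤ a (j + 1) ^ 2 := hlog j hj
        _ = a (j + 1) * a (j + 1) := sq _
  exact monotoneOn_of_le_add_one Set.ordConnected_Iic
    fun j _ _ hj ↦ h_step j (Nat.le_of_succ_le_succ hj)

theorem esymm_zero (n : ℕ) (lam : Fin n → ℝ) : esymm n 0 lam = 1 := by
  simp [esymm]

theorem esymm_mul_esymm_le_sq (n j : ℕ) (lam : Fin n → ℝ) :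
    esymm n j lam * esymm n (j + 2) lam ≤ esymm n (j + 1) lam ^ 2 := by
  simpa only [esymm, Finset.esymm_map_val] using
    multiset_esymm_mul_esymm_le_sq (univ.val.map lam) j

theorem esymm_pos_of_mem_gammaCone {n k l : ℕ} {lam : Fin n → ℝ} (hlam : lam ∈ GammaCone n k)
    (hl : l ≤ k) : 0 < esymm n l lam := by
  rcases Nat.eq_zero_or_pos l with rfl | hpos
  · simp [esymm_zero]
  · exact hlam l hpos hl

theorem esymm_le_of_esymm_le_succ {n m l : ℕ} {lam : Fin n → ℝ} (hlam : lam ∈ GammaCone n m)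
    (hm : esymm n m lam ≤ esymm n (m + 1) lam) (hl : l ≤ m) :
    esymm n l lam ≤ esymm n m lam := by
  have h_mono : MonotoneOn (fun j ↦ esymm n j lam) (Set.Iic (m + 1)) :=
    monotoneOn_Iic_succ_of_mul_le_sq (fun _ hj ↦ esymm_pos_of_mem_gammaCone hlam hj)
      (fun j _ ↦ esymm_mul_esymm_le_sq n j lam) hm
  exact h_mono (Set.mem_Iic.mpr (by lia)) (Set.mem_Iic.mpr (by lia)) hl

theorem mul_esymm_div_le_sub_fmix {n k l : ℕ} {β : ℕ → ℝ} {lam : Fin n → ℝ}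
    (hβ : ∀ j < k - 1, 0 ≤ β j) (hlam : lam ∈ GammaCone n (k - 1)) (hl : l < k - 1) :
    β l * (esymm n l lam / esymm n (k - 1) lam) ≤
      esymm n k lam / esymm n (k - 1) lam - fmix n k β lam := by
  rw [fmix, sub_sub_cancel]
  refine Finset.single_le_sum (f := fun j ↦ β j * (esymm n j lam / esymm n (k - 1) lam))
    (fun j hj ↦ ?_) (mem_range.mpr hl)
  have hj' := mem_range.mp hj
  exact mul_nonneg (hβ j hj') (div_pos (esymm_pos_of_mem_gammaCone hlam hj'.le)
    (esymm_pos_of_mem_gammaCone hlam le_rfl)).le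

theorem quotient_bounds_of_fmix_bounded_general {n k l : ℕ} {b B : ℝ} {β : ℕ → ℝ}
    {lam : Fin n → ℝ} (hb : 0 < b) (hβ : ∀ j < k - 1, b ≤ β j)
    (hlam : lam ∈ GammaCone n (k - 1)) (hf : -B ≤ fmix n k β lam) (hl : l < k - 1) :
    0 < esymm n l lam / esymm n (k - 1) lam ∧
      esymm n l lam / esymm n (k - 1) lam ≤ max 1 ((1 + B) / b) := by
  have h_den : 0 < esymm n (k - 1) lam := esymm_pos_of_mem_gammaCone hlam le_rfl
  have h_quot : 0 < esymm n l lam / esymm n (k - 1) lam :=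
    div_pos (esymm_pos_of_mem_gammaCone hlam hl.le) h_den
  refine ⟨h_quot, ?_⟩
  rcases le_total (esymm n (k - 1) lam) (esymm n k lam) with h_le | h_ge
  · refine le_max_of_le_left ((div_le_one h_den).mpr ?_)
    refine esymm_le_of_esymm_le_succ hlam ?_ hl.le
    rwa [Nat.sub_add_cancel (by lia)]
  · refine le_max_of_le_right ((le_div_iff₀' hb).mpr ?_)
    calc b * (esymm n l lam / esymm n (k - 1) lam)
        ≤ β l * (esymm n l lam / esymm n (k - 1) lam) := by gcongr; exact hβ l hl
      _ ≤ esymm n k lam / esymm n (k - 1) lam - fmix n k β lam :=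
        mul_esymm_div_le_sub_fmix (fun j hj ↦ hb.le.trans (hβ j hj)) hlam hl
      _ ≤ 1 + B := by linarith [(div_le_one h_den).mpr h_ge]

/-- Uniform bounds `0 < σ_l(λ)/σ_{k-1}(λ) ≤ C` for `0 ≤ l ≤ k-2`, with `C` depending
only on `n, k, b, B`, whenever all `β_l ≥ b > 0` and `|f(λ)| ≤ B`. -/
theorem quotient_bounds_of_fmix_bounded (n k : ℕ) (hk2 : 2 ≤ k) (hkn : k ≤ n)
    (b B : ℝ) (hb : 0 < b) (hB : 0 ≤ B) :
    ∃ C > 0, ∀ (β : ℕ → ℝ), (∀ l, l ≤ k - 2 → b ≤ β l) →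
      ∀ lam ∈ GammaCone n (k-1), |fmix n k β lam| ≤ B →
      ∀ l, l ≤ k - 2 →
        0 < esymm n l lam / esymm n (k-1) lam ∧
          esymm n l lam / esymm n (k-1) lam ≤ C := by
  refine ⟨max 1 ((1 + B) / b), by positivity, fun β hβ lam hlam hf l hl ↦ ?_⟩
  exact quotient_bounds_of_fmix_bounded_general hb (fun j hj ↦ hβ j (by lia)) hlam
    (abs_le.mp hf).1 (by lia)
end

section
/- Let 2 ≤ k ≤ n and 0 ≤ l ≤ k−2. The function λ ↦ ( σ_{k−1}(λ)/σ_l(λ) )^{1/(k−1−l)} is concave on the cone Γ_{k−1}. -/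
open Finset

/-! The heart of the matter is that `σ_{j+1} / σ_j` is concave on `Γ_j`, which is proved by
induction on `j`, together with the fact that deleting a coordinate maps `Γ_{j+1}` into `Γ_j`. Let
`q_i` be the ratio `σ_{j+1} / σ_j` in the variables other than `λ_i`. Then Euler's identity reads
`σ_{j+2} / σ_{j+1} = (j + 2)⁻¹ * ∑ i, λ_i * q_i / (λ_i + q_i)`, and the parallel sum
`p * q / (p + q)` is concave and increasing in `(p, q)` on the half-plane `p + q > 0`. In turn,
`σ_{j+2} / σ_{j+1}` is a Möbius function of `λ_i`, so its concavity makes it nondecreasing in `λ_i`,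
which forces `∂σ_{j+2} / ∂λ_i > 0` on `Γ_{j+2}`. The quotient in the theorem is a geometric mean of
the concave functions `σ_{j+1} / σ_j`, `l ≤ j < k - 1`. -/

section OrderedModule

variable {𝕜 E β ι : Type*} [Semiring 𝕜] [PartialOrder 𝕜] [AddCommMonoid E]
  [AddCommMonoid β] [PartialOrder β] [IsOrderedAddMonoid β] {S : Set E}

theorem concaveOn_of_forall_exists_concaveOn_ge [SMul 𝕜 E] [Module 𝕜 β] [PosSMulMono 𝕜 β]
    {f : E → β} (hS : Convex 𝕜 S)
    (h : ∀ z ∈ S, ∃ g, ConcaveOn 𝕜 S g ∧ (∀ x ∈ S, f x ≤ g x) ∧ g z = f z) :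
    ConcaveOn 𝕜 S f := by
  refine ⟨hS, fun x hx y hy a b ha hb hab => ?_⟩
  obtain ⟨g, hg, hfg, hgz⟩ := h _ (hS hx hy ha hb hab)
  calc a • f x + b • f y ≤ a • g x + b • g y := by gcongr <;> exact hfg _ ‹_›
    _ ≤ g (a • x + b • y) := hg.2 hx hy ha hb hab
    _ = f (a • x + b • y) := hgz

theorem concaveOn_finsetSum [SMul 𝕜 E] [Module 𝕜 β] (hS : Convex 𝕜 S) {s : Finset ι}
    {f : ι → E → β} (hf : ∀ i ∈ s, ConcaveOn 𝕜 S (f i)) :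
    ConcaveOn 𝕜 S fun x => ∑ i ∈ s, f i x := by
  rw [← Finset.sum_fn]
  exact Finset.sum_induction f (ConcaveOn 𝕜 S) (fun _ _ => ConcaveOn.add)
    (concaveOn_const 0 hS) hf

end OrderedModule

section OrderedField

variable {𝕜 E : Type*} [Field 𝕜] [LinearOrder 𝕜] [IsStrictOrderedRing 𝕜]

theorem mul_div_add_le_sq_mul_add {p q : 𝕜} (hpq : 0 < p + q) (c : 𝕜) :
    p * q / (p + q) ≤ c ^ 2 * p + (1 - c) ^ 2 * q := by
  rw [div_le_iff₀ hpq]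
  linear_combination sq_nonneg (c * p - (1 - c) * q)

theorem concaveOn_mul_div_add [AddCommMonoid E] [SMul 𝕜 E] {S : Set E} {f g : E → 𝕜}
    (hf : ConcaveOn 𝕜 S f) (hg : ConcaveOn 𝕜 S g)
    (hfg : ∀ x ∈ S, 0 < f x + g x) : ConcaveOn 𝕜 S fun x => f x * g x / (f x + g x) := by
  refine concaveOn_of_forall_exists_concaveOn_ge hf.1 fun z hz => ?_
  set c := g z / (f z + g z) with hc
  refine ⟨fun x => c ^ 2 * f x + (1 - c) ^ 2 * g x,
    (hf.smul (sq_nonneg c)).add (hg.smul (sq_nonneg (1 - c))),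
    fun x hx => mul_div_add_le_sq_mul_add (hfg x hx) c, ?_⟩
  have hz' := (hfg z hz).ne'
  simp only [hc]
  field_simp
  ring

/-- The inequality says that `r ↦ (a + r * b) / (c + r * d)` is nondecreasing; a decreasing
function of this form would be strictly convex. -/
theorem mul_le_mul_of_concaveOn_div {a b c d : 𝕜} (hc : 0 < c) (hd : 0 < d)
    (h : ConcaveOn 𝕜 (Set.Ici 0) fun r => (a + r * b) / (c + r * d)) : a * d ≤ b * c := by
  have hmid : 2⁻¹ * (a / c) + 2⁻¹ * ((a + 2 * b) / (c + 2 * d)) ≤ (a + b) / (c + d) := by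
    simpa using h.2 (Set.mem_Ici.2 le_rfl) (Set.mem_Ici.2 zero_le_two)
      (by positivity : (0 : 𝕜) ≤ 2⁻¹) (by positivity) (by norm_num : (2⁻¹ + 2⁻¹ : 𝕜) = 1)
  have hgap : (a + b) / (c + d) - (2⁻¹ * (a / c) + 2⁻¹ * ((a + 2 * b) / (c + 2 * d))) =
      (b * c - a * d) * (d / (c * (c + d) * (c + 2 * d))) := by
    field_simp
    ring
  refine sub_nonneg.1 (nonneg_of_mul_nonneg_left (hgap ▸ sub_nonneg.2 hmid) ?_)
  positivity

end OrderedField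

theorem concaveOn_prod_rpow {ι E : Type*} [AddCommMonoid E] [SMul ℝ E] {S : Set E} (hS : Convex ℝ S)
    {s : Finset ι} {w : ι → ℝ} (hw : ∀ i ∈ s, 0 ≤ w i) (hw_sum : ∑ i ∈ s, w i = 1)
    {f : ι → E → ℝ} (hf : ∀ i ∈ s, ConcaveOn ℝ S (f i)) (hf_pos : ∀ i ∈ s, ∀ x ∈ S, 0 < f i x) :
    ConcaveOn ℝ S fun x => ∏ i ∈ s, f i x ^ w i := by
  refine concaveOn_of_forall_exists_concaveOn_ge hS fun z hz => ?_
  have hprod_pos : 0 < ∏ i ∈ s, f i z ^ w i :=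
    prod_pos fun i hi => Real.rpow_pos_of_pos (hf_pos i hi z hz) _
  refine ⟨fun x => (∏ i ∈ s, f i z ^ w i) * ∑ i ∈ s, w i / f i z * f i x,
    (concaveOn_finsetSum hS fun i hi =>
      (hf i hi).smul (div_nonneg (hw i hi) (hf_pos i hi z hz).le)).smul hprod_pos.le,
    fun x hx => ?_, ?_⟩
  · rw [← div_le_iff₀' hprod_pos, ← prod_div_distrib]
    calc ∏ i ∈ s, f i x ^ w i / f i z ^ w i = ∏ i ∈ s, (f i x / f i z) ^ w i :=
          prod_congr rfl fun i hi =>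
            (Real.div_rpow (hf_pos i hi x hx).le (hf_pos i hi z hz).le _).symm
      _ ≤ ∑ i ∈ s, w i * (f i x / f i z) :=
          Real.geom_mean_le_arith_mean_weighted s w _ hw hw_sum fun i hi =>
            (div_pos (hf_pos i hi x hx) (hf_pos i hi z hz)).le
      _ = ∑ i ∈ s, w i / f i z * f i x := by
          simp only [div_mul_eq_mul_div, mul_div_assoc]
  · have hsum : ∑ i ∈ s, w i / f i z * f i z = 1 :=
      hw_sum ▸ sum_congr rfl fun i hi => div_mul_cancel₀ _ (hf_pos i hi z hz).ne'
    simp only [hsum, mul_one]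

section ElementarySymmetric

variable {ι R : Type*} [CommSemiring R]

/-- The elementary symmetric function `σ_j` of the variables `x i`, `i ∈ s`. Induction on the
degree deletes variables, hence the dependence on a finite set `s` of indices. -/
def esymmOn (s : Finset ι) (j : ℕ) (x : ι → R) : R :=
  ∑ t ∈ s.powersetCard j, ∏ i ∈ t, x i

@[simp]
theorem esymmOn_zero (s : Finset ι) (x : ι → R) : esymmOn s 0 x = 1 := by
  simp [esymmOn]

theorem esymmOn_one (s : Finset ι) (x : ι → R) : esymmOn s 1 x = ∑ i ∈ s, x i := by
  simp [esymmOn, powersetCard_one]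

theorem esymmOn_congr {s : Finset ι} {x y : ι → R} (h : ∀ i ∈ s, x i = y i) (j : ℕ) :
    esymmOn s j x = esymmOn s j y :=
  sum_congr rfl fun _ ht => prod_congr rfl fun i hi => h i ((mem_powersetCard.1 ht).1 hi)

variable [DecidableEq ι] {s : Finset ι} {i : ι}

theorem esymmOn_insert (hi : i ∉ s) (j : ℕ) (x : ι → R) :
    esymmOn (insert i s) (j + 1) x = esymmOn s (j + 1) x + x i * esymmOn s j x := by
  simp only [esymmOn, ← esymm_map_val, Multiset.esymm, insert_val_of_notMem hi,
    Multiset.map_cons, Multiset.powersetCard_cons, Multiset.map_add, Multiset.sum_add,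
    Multiset.map_map, Function.comp_def, Multiset.prod_cons, Multiset.sum_map_mul_left]

theorem esymmOn_succ_eq_erase (hi : i ∈ s) (j : ℕ) (x : ι → R) :
    esymmOn s (j + 1) x = esymmOn (s.erase i) (j + 1) x + x i * esymmOn (s.erase i) j x := by
  conv_lhs => rw [← insert_erase hi]
  exact esymmOn_insert (notMem_erase i s) j x

theorem esymmOn_add_single (hi : i ∈ s) (j : ℕ) (x : ι → R) (r : R) :
    esymmOn s (j + 1) (x + Pi.single i r) =
      esymmOn s (j + 1) x + r * esymmOn (s.erase i) j x := by
  have herase (m : ℕ) : esymmOn (s.erase i) m (x + Pi.single i r) = esymmOn (s.erase i) m x :=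
    esymmOn_congr (fun k hk => by simp [ne_of_mem_erase hk]) m
  simp only [esymmOn_succ_eq_erase hi, herase, Pi.add_apply, Pi.single_eq_same]
  ring

/-- Euler's identity: `esymmOn (s.erase i) j` is the `i`-th partial derivative of `σ_{j+1}`. -/
theorem sum_mul_esymmOn_erase (s : Finset ι) (j : ℕ) (x : ι → R) :
    ∑ i ∈ s, x i * esymmOn (s.erase i) j x = (j + 1) * esymmOn s (j + 1) x := by
  induction s using Finset.induction_on generalizing j with
  | empty => simp [esymmOn, powersetCard_eq_empty.2 (card_empty.trans_lt j.succ_pos)]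
  | insert a s ha ih =>
    rw [sum_insert ha, erase_insert ha, esymmOn_insert ha]
    have herase : ∀ i ∈ s, (insert a s).erase i = insert a (s.erase i) := fun i hi =>
      erase_insert_of_ne (ne_of_mem_of_not_mem hi ha).symm
    have ha_erase (i : ι) : a ∉ s.erase i := fun h => ha (mem_of_mem_erase h)
    cases j with
    | zero => simp [esymmOn_one, add_comm]
    | succ j =>
      have hsum : ∑ i ∈ s, x i * esymmOn ((insert a s).erase i) (j + 1) x =
          ∑ i ∈ s, x i * esymmOn (s.erase i) (j + 1) x +
            x a * ∑ i ∈ s, x i * esymmOn (s.erase i) j x := by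
        rw [mul_sum, ← sum_add_distrib]
        refine sum_congr rfl fun i hi => ?_
        rw [herase i hi, esymmOn_insert (ha_erase i)]
        ring
      rw [hsum, ih, ih]
      push_cast
      ring

end ElementarySymmetric

section GardingCone

variable {ι R : Type*} [CommSemiring R] {s : Finset ι} {j m : ℕ} {x : ι → R}

/-- The Gårding cone `Γ_j` in the variables `x i`, `i ∈ s`, as a cylinder in `ι → R`. -/
def gardingCone (R : Type*) [CommSemiring R] [LT R] (s : Finset ι) (j : ℕ) : Set (ι → R) :=
  {x | ∀ i, 1 ≤ i → i ≤ j → 0 < esymmOn s i x}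

section LT

variable [LT R]

theorem gardingCone_anti (s : Finset ι) : Antitone (gardingCone R s) :=
  fun _ _ hlm _ hx i hi hil => hx i hi (hil.trans hlm)

theorem mem_gardingCone_succ :
    x ∈ gardingCone R s (j + 1) ↔ x ∈ gardingCone R s j ∧ 0 < esymmOn s (j + 1) x := by
  refine ⟨fun h => ⟨gardingCone_anti s j.le_succ h, h _ j.succ_pos le_rfl⟩, fun h i hi hij => ?_⟩
  rcases Nat.le_succ_iff.1 hij with hij | rfl
  exacts [h.1 i hi hij, h.2]

theorem gardingCone_zero : gardingCone R s 0 = Set.univ :=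
  Set.eq_univ_of_forall fun _ _ hi hi0 => absurd (hi.trans hi0) (by decide)

end LT

theorem esymmOn_pos_of_mem_gardingCone [PartialOrder R] [IsStrictOrderedRing R]
    (hx : x ∈ gardingCone R s m) (hjm : j ≤ m) : 0 < esymmOn s j x := by
  rcases j.eq_zero_or_pos with rfl | hj
  · simp
  · exact hx j hj hjm

end GardingCone

section EsymmRatio

variable {ι 𝕜 : Type*} [Field 𝕜] {s : Finset ι} {i : ι} {j l m : ℕ} {x : ι → 𝕜}

/-- The ratio `σ_{j+1} / σ_j`, the basic concave function on the Gårding cone `Γ_j`. -/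
def esymmRatio (s : Finset ι) (j : ℕ) (x : ι → 𝕜) : 𝕜 :=
  esymmOn s (j + 1) x / esymmOn s j x

theorem esymmOn_succ_eq_add_esymmRatio_mul [DecidableEq ι] (hi : i ∈ s)
    (h : esymmOn (s.erase i) j x ≠ 0) :
    esymmOn s (j + 1) x = (x i + esymmRatio (s.erase i) j x) * esymmOn (s.erase i) j x := by
  rw [esymmRatio, add_mul, div_mul_cancel₀ _ h, esymmOn_succ_eq_erase hi, add_comm]

theorem esymmRatio_succ_eq_sum [DecidableEq ι] [CharZero 𝕜]
    (hx : ∀ i ∈ s, esymmOn (s.erase i) j x ≠ 0) :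
    esymmRatio s (j + 1) x = (j + 2 : 𝕜)⁻¹ *
      ∑ i ∈ s, x i * esymmRatio (s.erase i) j x / (x i + esymmRatio (s.erase i) j x) := by
  have hterm : ∀ i ∈ s,
      x i * esymmRatio (s.erase i) j x / (x i + esymmRatio (s.erase i) j x) =
        x i * esymmOn (s.erase i) (j + 1) x / esymmOn s (j + 1) x := fun i hi => by
    rw [esymmOn_succ_eq_add_esymmRatio_mul hi (hx i hi), ← mul_div_mul_right _ _ (hx i hi),
      mul_assoc, esymmRatio, div_mul_cancel₀ _ (hx i hi)]
  have hj : (j + 2 : 𝕜) ≠ 0 := mod_cast (j + 1).succ_ne_zero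
  rw [sum_congr rfl hterm, ← sum_div, sum_mul_esymmOn_erase, esymmRatio]
  push_cast
  field_simp
  ring

variable [LinearOrder 𝕜] [IsStrictOrderedRing 𝕜]

theorem esymmRatio_pos (hx : x ∈ gardingCone 𝕜 s m) (hjm : j < m) : 0 < esymmRatio s j x :=
  div_pos (esymmOn_pos_of_mem_gardingCone hx hjm) (esymmOn_pos_of_mem_gardingCone hx hjm.le)

theorem prod_Ico_esymmRatio (hx : x ∈ gardingCone 𝕜 s m) (hlm : l ≤ m) :
    ∏ j ∈ Ico l m, esymmRatio s j x = esymmOn s m x / esymmOn s l x := by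
  induction m, hlm using Nat.le_induction with
  | base => simp [(esymmOn_pos_of_mem_gardingCone hx le_rfl).ne']
  | succ m hlm ih =>
    rw [prod_Ico_succ_top hlm, ih (gardingCone_anti s m.le_succ hx), mul_comm, esymmRatio,
      div_mul_div_cancel₀ (esymmOn_pos_of_mem_gardingCone hx m.le_succ).ne']

theorem convex_gardingCone_succ (h : ConcaveOn 𝕜 (gardingCone 𝕜 s j) (esymmRatio s j)) :
    Convex 𝕜 (gardingCone 𝕜 s (j + 1)) := by
  suffices gardingCone 𝕜 s (j + 1) = {x ∈ gardingCone 𝕜 s j | 0 < esymmRatio s j x} from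
    this ▸ h.convex_gt 0
  ext x
  rw [mem_gardingCone_succ]
  exact and_congr_right fun hx =>
    (div_pos_iff_of_pos_right (esymmOn_pos_of_mem_gardingCone hx le_rfl)).symm

theorem concaveOn_esymmRatio_zero (s : Finset ι) :
    ConcaveOn 𝕜 (gardingCone 𝕜 s 0) (esymmRatio s 0) := by
  rw [gardingCone_zero]
  refine (concaveOn_finsetSum (s := s) convex_univ fun i _ =>
    (LinearMap.proj (R := 𝕜) (φ := fun _ => 𝕜) i).concaveOn convex_univ).congr fun x _ => ?_
  simp [esymmRatio, esymmOn_one]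

section Erase

variable [DecidableEq ι]

theorem add_esymmRatio_erase_pos (hi : i ∈ s) (hx : x ∈ gardingCone 𝕜 s (j + 1))
    (hxi : x ∈ gardingCone 𝕜 (s.erase i) j) : 0 < x i + esymmRatio (s.erase i) j x := by
  have herase := esymmOn_pos_of_mem_gardingCone hxi le_rfl
  refine pos_of_mul_pos_left ?_ herase.le
  rw [← esymmOn_succ_eq_add_esymmRatio_mul hi herase.ne']
  exact esymmOn_pos_of_mem_gardingCone hx le_rfl

theorem concaveOn_esymmRatio_succ (hs : ConcaveOn 𝕜 (gardingCone 𝕜 s j) (esymmRatio s j))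
    (herase : ∀ i ∈ s,
      ConcaveOn 𝕜 (gardingCone 𝕜 (s.erase i) j) (esymmRatio (s.erase i) j))
    (hsub : ∀ i ∈ s, gardingCone 𝕜 s (j + 1) ⊆ gardingCone 𝕜 (s.erase i) j) :
    ConcaveOn 𝕜 (gardingCone 𝕜 s (j + 1)) (esymmRatio s (j + 1)) := by
  have hconv := convex_gardingCone_succ hs
  have hterm : ∀ i ∈ s, ConcaveOn 𝕜 (gardingCone 𝕜 s (j + 1)) fun x =>
      x i * esymmRatio (s.erase i) j x / (x i + esymmRatio (s.erase i) j x) := fun i hi =>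
    concaveOn_mul_div_add ((LinearMap.proj i).concaveOn hconv)
      ((herase i hi).subset (hsub i hi) hconv)
      fun x hx => add_esymmRatio_erase_pos hi hx (hsub i hi hx)
  refine ((concaveOn_finsetSum hconv hterm).smul
    (by positivity : (0 : 𝕜) ≤ (j + 2 : 𝕜)⁻¹)).congr fun x hx => ?_
  exact (esymmRatio_succ_eq_sum fun i hi =>
    (esymmOn_pos_of_mem_gardingCone (hsub i hi hx) le_rfl).ne').symm

theorem add_single_mem_gardingCone (hi : i ∈ s) (hx : x ∈ gardingCone 𝕜 s (j + 1))
    (hxi : x ∈ gardingCone 𝕜 (s.erase i) j) {r : 𝕜} (hr : 0 ≤ r) :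
    x + Pi.single i r ∈ gardingCone 𝕜 s (j + 1) := by
  rintro (_ | m) hm hmj
  · exact absurd hm (by decide)
  · rw [esymmOn_add_single hi]
    exact add_pos_of_pos_of_nonneg (hx _ hm hmj) (mul_nonneg hr
      (esymmOn_pos_of_mem_gardingCone hxi (Nat.succ_le_succ_iff.1 hmj)).le)

theorem esymmOn_erase_pos_of_concaveOn_esymmRatio (hi : i ∈ s)
    (hconc : ConcaveOn 𝕜 (gardingCone 𝕜 s (j + 1)) (esymmRatio s (j + 1)))
    (hx : x ∈ gardingCone 𝕜 s (j + 2)) (hxi : x ∈ gardingCone 𝕜 (s.erase i) j) :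
    0 < esymmOn (s.erase i) (j + 1) x := by
  have hx' : x ∈ gardingCone 𝕜 s (j + 1) := gardingCone_anti s (j + 1).le_succ hx
  have h₀ := esymmOn_pos_of_mem_gardingCone hxi le_rfl
  have h₁ := esymmOn_pos_of_mem_gardingCone hx' le_rfl
  have h₂ := esymmOn_pos_of_mem_gardingCone hx le_rfl
  have hline : ConcaveOn 𝕜 (Set.Ici 0) fun r : 𝕜 =>
      (esymmOn s (j + 2) x + r * esymmOn (s.erase i) (j + 1) x) /
        (esymmOn s (j + 1) x + r * esymmOn (s.erase i) j x) := by
    refine ((hconc.translate_right x).comp_linearMap (LinearMap.single 𝕜 (fun _ => 𝕜) i)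
      |>.subset (fun r hr => add_single_mem_gardingCone hi hx' hxi hr) (convex_Ici 0)).congr
      fun r _ => ?_
    simp [esymmRatio, esymmOn_add_single hi]
  exact pos_of_mul_pos_left
    ((mul_pos h₂ h₀).trans_le (mul_le_mul_of_concaveOn_div h₁ h₀ hline)) h₁.le

theorem concaveOn_esymmRatio_and_gardingCone_subset_erase (j : ℕ) :
    (∀ s : Finset ι, ConcaveOn 𝕜 (gardingCone 𝕜 s j) (esymmRatio s j)) ∧
      ∀ s : Finset ι, ∀ i ∈ s, gardingCone 𝕜 s (j + 1) ⊆ gardingCone 𝕜 (s.erase i) j := by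
  induction j with
  | zero =>
    exact ⟨concaveOn_esymmRatio_zero,
      fun s i _ => (Set.subset_univ _).trans_eq gardingCone_zero.symm⟩
  | succ j ih =>
    obtain ⟨hconc, hsub⟩ := ih
    have hconc' (s : Finset ι) := concaveOn_esymmRatio_succ (hconc s)
      (fun i _ => hconc (s.erase i)) (hsub s)
    refine ⟨hconc', fun s i hi x hx => ?_⟩
    have hxi := hsub s i hi (gardingCone_anti s (j + 1).le_succ hx)
    exact mem_gardingCone_succ.2
      ⟨hxi, esymmOn_erase_pos_of_concaveOn_esymmRatio hi (hconc' s) hx hxi⟩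

end Erase

theorem concaveOn_esymmRatio (s : Finset ι) (j : ℕ) :
    ConcaveOn 𝕜 (gardingCone 𝕜 s j) (esymmRatio s j) := by
  classical exact (concaveOn_esymmRatio_and_gardingCone_subset_erase j).1 s

end EsymmRatio

theorem quotient_rpow_concave_general {ι : Type*} (s : Finset ι) {l m : ℕ} (hlm : l < m) :
    ConcaveOn ℝ (gardingCone ℝ s m)
      fun x => (esymmOn s m x / esymmOn s l x) ^ ((m : ℝ) - l)⁻¹ := by
  have hconv : Convex ℝ (gardingCone ℝ s m) := (concaveOn_esymmRatio s m).1
  have hml : 0 < (m : ℝ) - l := sub_pos.2 (Nat.cast_lt.2 hlm)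
  have hgeom := concaveOn_prod_rpow hconv (s := Ico l m) (w := fun _ => ((m : ℝ) - l)⁻¹)
    (fun _ _ => (inv_pos.2 hml).le)
    (by simp [Nat.cast_sub hlm.le, hml.ne'])
    (fun j hj => (concaveOn_esymmRatio s j).subset
      (gardingCone_anti s (mem_Ico.1 hj).2.le) hconv)
    (fun j hj x hx => esymmRatio_pos hx (mem_Ico.1 hj).2)
  refine hgeom.congr fun x hx => ?_
  beta_reduce
  rw [Real.finsetProd_rpow _ _ fun j hj => (esymmRatio_pos hx (mem_Ico.1 hj).2).le,
    prod_Ico_esymmRatio hx hlm.le]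

/-- The function `λ ↦ (σ_{k-1}(λ)/σ_l(λ))^{1/(k-1-l)}` is concave on `Γ_{k-1}`. -/
theorem quotient_rpow_concave (n k l : ℕ) (hk2 : 2 ≤ k) (hkn : k ≤ n) (hl : l ≤ k - 2) :
    ConcaveOn ℝ (GammaCone n (k-1))
      (fun lam => (esymm n (k-1) lam / esymm n l lam)
        ^ (((k : ℝ) - 1 - (l : ℝ))⁻¹)) := by
  rw [← Nat.cast_pred (by lia)]
  exact quotient_rpow_concave_general univ (by lia)
end
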